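/- Convex-split lemma (relative entropy form): Let ρ_{AB} be a bipartite density operator with marginals ρ_A, ρ_B, let ρ̃_{AB} be another density operator on AB with marginal ρ̃_B, and suppose ρ̃_{AB} ≤ 2^λ ρ_A ⊗ ρ̃_B. Define τ̃ on A₁...A_K B as the uniform mixture over k ∈ {1,...,K} of ρ_{A₁}⊗...⊗ρ_{A_{k−1}} ⊗ ρ̃_{A_k B} ⊗ ρ_{A_{k+1}}⊗...⊗ρ_{A_K}, where each A_i carries a copy of H_A and ρ̃_{A_k B} means ρ̃_{AB} placed on systems A_k and B. Then the fidelity satisfies F(τ̃, ρ_A^{⊗K} ⊗ ρ̃_B) ≥ 1 − 2^λ/K. -/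

import Mathlib

open Matrix Kronecker ComplexOrder

/-- Apply a real function to a Hermitian matrix via its spectral decomposition
(junk value `0` for non-Hermitian input). -/
noncomputable def matFun {n : Type*} [Fintype n] [DecidableEq n]
    (f : ℝ → ℝ) (A : Matrix n n ℂ) : Matrix n n ℂ :=
  if hA : A.IsHermitian then
    (hA.eigenvectorUnitary : Matrix n n ℂ) *
      Matrix.diagonal (fun i => (f (hA.eigenvalues i) : ℂ)) *
      star (hA.eigenvectorUnitary : Matrix n n ℂ)
  else 0

/-- Matrix logarithm base 2, taken on the support (eigenvalue 0 ↦ 0 since `Real.logb 2 0 = 0`). -/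
noncomputable def mlog {n : Type*} [Fintype n] [DecidableEq n] (A : Matrix n n ℂ) :
    Matrix n n ℂ := matFun (Real.logb 2) A

/-- Positive-semidefinite square root of a Hermitian matrix. -/
noncomputable def msqrt {n : Type*} [Fintype n] [DecidableEq n] (A : Matrix n n ℂ) :
    Matrix n n ℂ := matFun Real.sqrt A

/-- Square root of the Moore–Penrose pseudoinverse (on the support), i.e. `A ↦ A^{-1/2}`. -/
noncomputable def pinvSqrt {n : Type*} [Fintype n] [DecidableEq n] (A : Matrix n n ℂ) :
    Matrix n n ℂ := matFun (fun x => (Real.sqrt x)⁻¹) A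

/-- Trace norm `‖A‖₁ = Tr √(AᴴA)`. -/
noncomputable def traceNorm {n : Type*} [Fintype n] [DecidableEq n] (A : Matrix n n ℂ) : ℝ :=
  (msqrt (Aᴴ * A)).trace.re

/-- Quantum relative entropy (base 2), `D(ρ‖σ) = Tr{ρ (log₂ρ − log₂σ)}`. -/
noncomputable def relEnt {n : Type*} [Fintype n] [DecidableEq n] (ρ σ : Matrix n n ℂ) : ℝ :=
  (ρ * (mlog ρ - mlog σ)).trace.re

/-- Root fidelity `√F(ρ,σ) = ‖√ρ√σ‖₁`. -/
noncomputable def sqrtFid {n : Type*} [Fintype n] [DecidableEq n] (ρ σ : Matrix n n ℂ) : ℝ :=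
  traceNorm (msqrt ρ * msqrt σ)

/-- Fidelity `F(ρ,σ) = ‖√ρ√σ‖₁²`. -/
noncomputable def fid {n : Type*} [Fintype n] [DecidableEq n] (ρ σ : Matrix n n ℂ) : ℝ :=
  (sqrtFid ρ σ) ^ 2

/-- Von Neumann entropy (base 2). -/
noncomputable def vnEntropy {n : Type*} [Fintype n] [DecidableEq n] (ρ : Matrix n n ℂ) : ℝ :=
  -((ρ * mlog ρ).trace.re)

/-- A density operator: positive semi-definite with unit trace. -/
def IsDensity {n : Type*} [Fintype n] [DecidableEq n] (ρ : Matrix n n ℂ) : Prop :=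
  ρ.PosSemidef ∧ ρ.trace = 1

/-- Support inclusion `supp ρ ⊆ supp σ`, phrased via kernel containment. -/
def SuppLE {n : Type*} [Fintype n] [DecidableEq n] (ρ σ : Matrix n n ℂ) : Prop :=
  ∀ v : n → ℂ, σ *ᵥ v = 0 → ρ *ᵥ v = 0

/-- A-marginal (partial trace over B) of a bipartite matrix. -/
noncomputable def margA {a b : Type*} [Fintype a] [Fintype b]
    (ρ : Matrix (a × b) (a × b) ℂ) : Matrix a a ℂ :=
  Matrix.of fun i i' => ∑ j, ρ (i, j) (i', j)

/-- B-marginal (partial trace over A) of a bipartite matrix. -/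
noncomputable def margB {a b : Type*} [Fintype a] [Fintype b]
    (ρ : Matrix (a × b) (a × b) ℂ) : Matrix b b ℂ :=
  Matrix.of fun j j' => ∑ i, ρ (i, j) (i, j')

/-- Max-relative entropy `D_max(ω‖τ) = inf{λ : ω ≤ 2^λ τ}`. -/
noncomputable def Dmax {n : Type*} [Fintype n] [DecidableEq n] (ω τ : Matrix n n ℂ) : ℝ :=
  sInf {l : ℝ | ((2 : ℝ) ^ l • τ - ω).PosSemidef}

/-- Purified distance between (normalized) states, `P(ρ,σ) = √(1 − F(ρ,σ))`. -/
noncomputable def pDist {n : Type*} [Fintype n] [DecidableEq n] (ρ σ : Matrix n n ℂ) : ℝ :=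
  Real.sqrt (1 - fid ρ σ)

/-!
Write `σ = A^{⊗K} ⊗ B` with `A = ρ_A`, `B = ρ̃_B`, let `X = (A ⊗ B)^{-1/2} ρ̃ (A ⊗ B)^{-1/2} ≤ 2^λ`,
and let `T` be the average over `k` of the operators `X_k` that act as `X` on `A_k ⊗ B` and as the
identity elsewhere. Then `τ̃ = √σ T √σ`, so `√F(τ̃, σ) = ‖√T σ‖₁ ≥ Re Tr(√T σ)`. As
`3 y² ≤ y⁴ + 2 y` for `y ≥ 0`, this gives `2 √F ≥ 3 Tr(T σ) - Tr(T² σ)`, which reduces the bound to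
a second-moment computation: `Tr(T σ) = 1`, and in `Tr(T² σ)` the cross terms `Tr(X_k X_j σ)` are
`1` because the `B`-marginal of `X (A ⊗ B)` is again `B`, while the `K` diagonal terms are at most
`2^λ` because `X² ≤ 2^λ X`. Hence `√F ≥ 1 - (2^λ - 1) / (2K)`, and `F ≥ 2 √F - 1`.
-/

theorem three_nsmul_sq_le_pow_four_add_two_nsmul {R : Type*} [Ring R] [PartialOrder R] [StarRing R]
    [StarOrderedRing R] {y : R} (hy : 0 ≤ y) : 3 • (y * y) ≤ y * y * (y * y) + 2 • y := by
  have hy_sa := IsSelfAdjoint.of_nonneg hy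
  have hsq : 0 ≤ (y * y - y) * (y * y - y) :=
    ((hy_sa.commute_iff hy_sa).1 rfl |>.sub hy_sa).mul_self_nonneg
  have hconj : 0 ≤ (y - 1) * y * (y - 1) := (hy_sa.sub (.one R)).conjugate_nonneg hy
  have hfactor : y * y * (y * y) + 2 • y - 3 • (y * y) =
      (y * y - y) * (y * y - y) + ((y - 1) * y * (y - 1) + (y - 1) * y * (y - 1)) := by
    noncomm_ring
  rw [← sub_nonneg, hfactor]
  exact add_nonneg hsq (add_nonneg hconj hconj)

theorem groupInverse_unique {S : Type*} [Semigroup S] {s x y : S} (hsx : Commute s x)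
    (hsy : Commute s y) (hsxs : s * x * s = s) (hxsx : x * s * x = x) (hsys : s * y * s = s)
    (hysy : y * s * y = y) : x = y := by
  have hproj : x * s = s * y :=
    calc x * s = x * s * (y * s) := by rw [← mul_assoc, mul_assoc x, mul_assoc x, hsys]
      _ = s * x * s * y := by rw [← hsx.eq, ← hsy.eq, ← mul_assoc]
      _ = s * y := by rw [hsxs]
  calc x = s * y * x := by rw [← hproj, hxsx]
    _ = y * (x * s) := by rw [hsy.eq, mul_assoc, hsx.eq]
    _ = y := by rw [hproj, ← mul_assoc, hysy]

section FunctionalCalculus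

open scoped MatrixOrder

variable {n : Type*} [Fintype n] [DecidableEq n] {A : Matrix n n ℂ}

theorem matFun_eq_cfc (f : ℝ → ℝ) (A : Matrix n n ℂ) : matFun f A = cfc f A := by
  unfold matFun
  split_ifs with hA
  · exact (hA.cfc_eq f).symm
  · exact (cfc_apply_of_not_predicate A hA).symm

theorem matFun_nonneg {f : ℝ → ℝ} (hf : ∀ x, 0 ≤ f x) (A : Matrix n n ℂ) : 0 ≤ matFun f A :=
  matFun_eq_cfc f A ▸ cfc_nonneg fun x _ => hf x

theorem msqrt_nonneg (A : Matrix n n ℂ) : 0 ≤ msqrt A :=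
  matFun_nonneg Real.sqrt_nonneg A

theorem pinvSqrt_nonneg (A : Matrix n n ℂ) : 0 ≤ pinvSqrt A :=
  matFun_nonneg (fun x => inv_nonneg.2 (Real.sqrt_nonneg x)) A

theorem commute_msqrt_pinvSqrt (A : Matrix n n ℂ) : Commute (msqrt A) (pinvSqrt A) := by
  rw [msqrt, pinvSqrt, matFun_eq_cfc, matFun_eq_cfc]
  exact cfc_commute_cfc _ _ A

theorem msqrt_eq_cfcSqrt (hA : 0 ≤ A) : msqrt A = CFC.sqrt A := by
  rw [msqrt, matFun_eq_cfc, CFC.sqrt_eq_real_sqrt A hA, cfcₙ_eq_cfc]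

theorem msqrt_mul_msqrt (hA : 0 ≤ A) : msqrt A * msqrt A = A := by
  rw [msqrt_eq_cfcSqrt hA, CFC.sqrt_mul_sqrt_self A hA]

theorem msqrt_mul_self (hA : 0 ≤ A) : msqrt (A * A) = A := by
  rw [msqrt_eq_cfcSqrt (IsSelfAdjoint.of_nonneg hA).mul_self_nonneg, CFC.sqrt_mul_self A hA]

theorem mul_pinvSqrt (hA : 0 ≤ A) : A * pinvSqrt A = msqrt A := by
  have hfin := A.finite_real_spectrum
  calc A * pinvSqrt A = cfc (fun x : ℝ => x) A * cfc (fun x => (√x)⁻¹) A := by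
        rw [pinvSqrt, matFun_eq_cfc, cfc_id' ℝ A]
    _ = cfc (fun x : ℝ => x * (√x)⁻¹) A :=
        (cfc_mul _ _ A (hfin.continuousOn _) (hfin.continuousOn _)).symm
    _ = msqrt A := by
        simp only [← div_eq_mul_inv, Real.div_sqrt]
        exact (matFun_eq_cfc Real.sqrt A).symm

theorem pinvSqrt_mul (hA : 0 ≤ A) : pinvSqrt A * A = msqrt A := by
  simpa [(IsSelfAdjoint.of_nonneg hA).star_eq,
    (IsSelfAdjoint.of_nonneg (pinvSqrt_nonneg A)).star_eq,
    (IsSelfAdjoint.of_nonneg (msqrt_nonneg A)).star_eq] using congrArg star (mul_pinvSqrt hA)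

theorem msqrt_mul_pinvSqrt_mul_msqrt (hA : 0 ≤ A) :
    msqrt A * pinvSqrt A * msqrt A = msqrt A := by
  rw [commute_msqrt_pinvSqrt, mul_assoc, msqrt_mul_msqrt hA, pinvSqrt_mul hA]

theorem pinvSqrt_mul_msqrt_mul_pinvSqrt (A : Matrix n n ℂ) :
    pinvSqrt A * msqrt A * pinvSqrt A = pinvSqrt A := by
  have hfin := A.finite_real_spectrum
  simp only [pinvSqrt, msqrt, matFun_eq_cfc]
  rw [← cfc_mul _ _ A (hfin.continuousOn _) (hfin.continuousOn _),
    ← cfc_mul _ _ A (hfin.continuousOn _) (hfin.continuousOn _)]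
  exact cfc_congr fun x _ => by simpa using mul_inv_mul_cancel (√x)⁻¹

/-- The orthogonal projection onto the support of a positive semidefinite matrix. -/
noncomputable def supportProj (A : Matrix n n ℂ) : Matrix n n ℂ :=
  msqrt A * pinvSqrt A

theorem mul_supportProj (hA : 0 ≤ A) : A * supportProj A = A := by
  rw [supportProj, commute_msqrt_pinvSqrt, ← mul_assoc, mul_pinvSqrt hA, msqrt_mul_msqrt hA]

theorem msqrt_mul_supportProj (hA : 0 ≤ A) : msqrt A * supportProj A = msqrt A := by
  rw [← pinvSqrt_mul hA, mul_assoc, mul_supportProj hA]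

theorem isStarProjection_supportProj (hA : 0 ≤ A) : IsStarProjection (supportProj A) where
  isIdempotentElem := by
    change supportProj A * supportProj A = supportProj A
    nth_rw 1 [supportProj]
    rw [commute_msqrt_pinvSqrt, mul_assoc, msqrt_mul_supportProj hA, supportProj,
      commute_msqrt_pinvSqrt]
  isSelfAdjoint :=
    ((IsSelfAdjoint.of_nonneg (msqrt_nonneg A)).commute_iff
      (IsSelfAdjoint.of_nonneg (pinvSqrt_nonneg A))).1 (commute_msqrt_pinvSqrt A)

theorem pinvSqrt_eq_of_commute {r : Matrix n n ℂ} (hA : 0 ≤ A) (hcomm : Commute (msqrt A) r)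
    (hsrs : msqrt A * r * msqrt A = msqrt A) (hrsr : r * msqrt A * r = r) :
    pinvSqrt A = r :=
  groupInverse_unique (commute_msqrt_pinvSqrt A) hcomm (msqrt_mul_pinvSqrt_mul_msqrt hA)
    (pinvSqrt_mul_msqrt_mul_pinvSqrt A) hsrs hrsr

end FunctionalCalculus

section Kronecker

open scoped MatrixOrder

variable {m n : Type*} {A : Matrix m m ℂ} {B : Matrix n n ℂ}

theorem kronecker_nonneg [Finite m] [Finite n] (hA : 0 ≤ A) (hB : 0 ≤ B) : 0 ≤ A ⊗ₖ B :=
  ((nonneg_iff_posSemidef.1 hA).kronecker (nonneg_iff_posSemidef.1 hB)).nonneg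

variable [Fintype m] [DecidableEq m] [Fintype n] [DecidableEq n]

theorem msqrt_kronecker (hA : 0 ≤ A) (hB : 0 ≤ B) : msqrt (A ⊗ₖ B) = msqrt A ⊗ₖ msqrt B := by
  conv_lhs => rw [← msqrt_mul_msqrt hA, ← msqrt_mul_msqrt hB, mul_kronecker_mul]
  exact msqrt_mul_self (kronecker_nonneg (msqrt_nonneg A) (msqrt_nonneg B))

theorem pinvSqrt_kronecker (hA : 0 ≤ A) (hB : 0 ≤ B) :
    pinvSqrt (A ⊗ₖ B) = pinvSqrt A ⊗ₖ pinvSqrt B := by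
  apply pinvSqrt_eq_of_commute (kronecker_nonneg hA hB) <;> rw [msqrt_kronecker hA hB]
  · simp only [Commute, SemiconjBy, ← mul_kronecker_mul, (commute_msqrt_pinvSqrt _).eq]
  · rw [← mul_kronecker_mul, ← mul_kronecker_mul, msqrt_mul_pinvSqrt_mul_msqrt hA,
      msqrt_mul_pinvSqrt_mul_msqrt hB]
  · simp only [← mul_kronecker_mul, pinvSqrt_mul_msqrt_mul_pinvSqrt]

end Kronecker

section Trace

open scoped MatrixOrder

variable {n : Type*} [Fintype n]

theorem re_trace_nonneg {A : Matrix n n ℂ} (hA : 0 ≤ A) : 0 ≤ A.trace.re :=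
  (Complex.le_def.1 (nonneg_iff_posSemidef.1 hA).trace_nonneg).1

theorem re_trace_mul_nonneg {A S : Matrix n n ℂ} (hA : 0 ≤ A) (hS : 0 ≤ S) :
    0 ≤ (A * S).trace.re := by
  classical
  rw [← msqrt_mul_msqrt hS, ← mul_assoc, trace_mul_cycle]
  exact re_trace_nonneg (conjugate_nonneg_of_nonneg hA (msqrt_nonneg S))

theorem re_trace_mul_le_re_trace_mul {A B S : Matrix n n ℂ} (hAB : A ≤ B) (hS : 0 ≤ S) :
    (A * S).trace.re ≤ (B * S).trace.re := by
  have h := re_trace_mul_nonneg (sub_nonneg.2 hAB) hS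
  rwa [sub_mul, trace_sub, Complex.sub_re, sub_nonneg] at h

variable [DecidableEq n]

theorem mul_supportProj_msqrt_conjTranspose_mul_self (A : Matrix n n ℂ) :
    A * supportProj (msqrt (Aᴴ * A)) = A := by
  set H := msqrt (Aᴴ * A)
  have hH : 0 ≤ H := msqrt_nonneg _
  have hHH : H * H = Aᴴ * A := msqrt_mul_msqrt (posSemidef_conjTranspose_mul_self A).nonneg
  have hker : Aᴴ * A * (1 - supportProj H) = 0 := by
    rw [← hHH, mul_assoc, mul_sub, mul_one, mul_supportProj hH, sub_self, mul_zero]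
  rw [conjTranspose_mul_self_mul_eq_zero, mul_sub, mul_one, sub_eq_zero] at hker
  exact hker.symm

/-- With `H = |A|`, `h = √H` and `r` its pseudoinverse, `‖h - A r‖²` in Hilbert–Schmidt norm equals
`2 (Tr H - Re Tr A)`. -/
theorem re_trace_le_traceNorm (A : Matrix n n ℂ) : A.trace.re ≤ traceNorm A := by
  set H := msqrt (Aᴴ * A) with hHdef
  set h := msqrt H
  set r := pinvSqrt H
  have hH : 0 ≤ H := msqrt_nonneg _
  have hHH : H * H = Aᴴ * A := msqrt_mul_msqrt (posSemidef_conjTranspose_mul_self A).nonneg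
  have hh : hᴴ = h := (IsSelfAdjoint.of_nonneg (msqrt_nonneg H)).star_eq
  have hr : rᴴ = r := (IsSelfAdjoint.of_nonneg (pinvSqrt_nonneg H)).star_eq
  have hself : (h * h).trace = H.trace := by rw [msqrt_mul_msqrt hH]
  have hcross : (h * (A * r)).trace = A.trace := by
    rw [← mul_assoc, trace_mul_cycle, trace_mul_comm, ← commute_msqrt_pinvSqrt H]
    exact congrArg trace (mul_supportProj_msqrt_conjTranspose_mul_self A)
  have hquad : (r * Aᴴ * (A * r)).trace = H.trace := by
    rw [← mul_assoc, mul_assoc r, ← hHH, ← mul_assoc, pinvSqrt_mul hH, mul_assoc, mul_pinvSqrt hH,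
      hself]
  have hcross' : (r * Aᴴ * h).trace = star A.trace := by
    rw [← hcross, ← trace_conjTranspose, conjTranspose_mul, conjTranspose_mul, hh, hr]
  have hnonneg := re_trace_nonneg (posSemidef_conjTranspose_mul_self (h - A * r)).nonneg
  rw [conjTranspose_sub, conjTranspose_mul, hh, hr, sub_mul, mul_sub, mul_sub] at hnonneg
  simp only [trace_sub, hself, hcross, hcross', hquad, Complex.sub_re, Complex.star_def,
    Complex.conj_re] at hnonneg
  rw [traceNorm, ← hHdef]
  linarith

end Trace

section Fidelity

open scoped MatrixOrder

variable {n : Type*} [Fintype n] [DecidableEq n]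

/-- `‖M‖₁` depends on `MᴴM` only, and both sides have `MᴴM = σTσ`. -/
theorem sqrtFid_msqrt_conj {σ T : Matrix n n ℂ} (hσ : 0 ≤ σ) (hT : 0 ≤ T) :
    sqrtFid (msqrt σ * T * msqrt σ) σ = traceNorm (msqrt T * σ) := by
  set s := msqrt σ
  have hs : 0 ≤ s := msqrt_nonneg σ
  have hτ : 0 ≤ s * T * s := conjugate_nonneg_of_nonneg hT hs
  have hgram : (msqrt (s * T * s) * s)ᴴ * (msqrt (s * T * s) * s) =
      (msqrt T * σ)ᴴ * (msqrt T * σ) :=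
    calc _ = s * (msqrt (s * T * s) * msqrt (s * T * s)) * s := by
          rw [conjTranspose_mul, (nonneg_iff_posSemidef.1 hs).isHermitian.eq,
            (nonneg_iff_posSemidef.1 (msqrt_nonneg _)).isHermitian.eq]
          simp only [mul_assoc]
      _ = s * s * T * (s * s) := by rw [msqrt_mul_msqrt hτ]; simp only [mul_assoc]
      _ = σ * (msqrt T * msqrt T) * σ := by rw [msqrt_mul_msqrt hσ, msqrt_mul_msqrt hT]
      _ = _ := by
          rw [conjTranspose_mul, (nonneg_iff_posSemidef.1 hσ).isHermitian.eq,
            (nonneg_iff_posSemidef.1 (msqrt_nonneg _)).isHermitian.eq]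
          simp only [mul_assoc]
  rw [sqrtFid, traceNorm, traceNorm, hgram]

theorem three_mul_re_trace_sub_le_two_mul_sqrtFid {σ T : Matrix n n ℂ} (hσ : 0 ≤ σ) (hT : 0 ≤ T) :
    3 * (T * σ).trace.re - (T * T * σ).trace.re ≤
      2 * sqrtFid (msqrt σ * T * msqrt σ) σ := by
  have hsqrt : 3 • T ≤ T * T + 2 • msqrt T := by
    simpa only [msqrt_mul_msqrt hT] using
      three_nsmul_sq_le_pow_four_add_two_nsmul (msqrt_nonneg T)
  have htrace : 3 * (T * σ).trace.re ≤ (T * T * σ).trace.re + 2 * (msqrt T * σ).trace.re := by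
    simpa only [add_mul, smul_mul_assoc, trace_add, trace_smul, Complex.add_re, Complex.re_nsmul,
      nsmul_eq_mul (α := ℝ), Nat.cast_ofNat] using re_trace_mul_le_re_trace_mul hsqrt hσ
  have hfid : (msqrt T * σ).trace.re ≤ sqrtFid (msqrt σ * T * msqrt σ) σ :=
    sqrtFid_msqrt_conj hσ hT ▸ re_trace_le_traceNorm (msqrt T * σ)
  linarith

end Fidelity

section RelativeDensity

open scoped MatrixOrder

variable {n : Type*} [Fintype n] [DecidableEq n] {ρ σ : Matrix n n ℂ} {c : ℝ}

theorem suppLE_of_le_smul (hρ : 0 ≤ ρ) (hle : ρ ≤ c • σ) : SuppLE ρ σ := by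
  intro v hv
  have hρv : 0 ≤ star v ⬝ᵥ ρ *ᵥ v := (nonneg_iff_posSemidef.1 hρ).dotProduct_mulVec_nonneg v
  have hsub : 0 ≤ star v ⬝ᵥ (c • σ - ρ) *ᵥ v := (le_iff.1 hle).dotProduct_mulVec_nonneg v
  rw [sub_mulVec, smul_mulVec, hv, smul_zero, zero_sub, dotProduct_neg, neg_nonneg] at hsub
  exact ((nonneg_iff_posSemidef.1 hρ).dotProduct_mulVec_zero_iff v).1 (le_antisymm hsub hρv)

theorem SuppLE.mul_eq_zero (h : SuppLE ρ σ) {M : Matrix n n ℂ} (hM : σ * M = 0) : ρ * M = 0 := by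
  ext i j
  exact congrFun (h (fun k => M k j) (funext fun k => congrFun₂ hM k j)) i

theorem SuppLE.mul_eq_self (h : SuppLE ρ σ) {P : Matrix n n ℂ} (hP : σ * P = σ) : ρ * P = ρ := by
  rw [← sub_eq_zero, ← mul_sub_one]
  exact h.mul_eq_zero (by rw [mul_sub_one, hP, sub_self])

theorem one_le_of_le_smul (hσ : IsDensity σ) (hρ : IsDensity ρ) (hle : ρ ≤ c • σ) : 1 ≤ c := by
  have htrace := re_trace_nonneg (sub_nonneg.2 hle)
  rw [trace_sub, trace_smul, hσ.2, hρ.2] at htrace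
  simpa using htrace

/-- The noncommutative density `σ^{-1/2} ρ σ^{-1/2}` of `ρ` with respect to `σ`, with the inverse
taken on the support of `σ`. -/
noncomputable def relativeDensity (ρ σ : Matrix n n ℂ) : Matrix n n ℂ :=
  pinvSqrt σ * ρ * pinvSqrt σ

theorem relativeDensity_nonneg (hρ : 0 ≤ ρ) (σ : Matrix n n ℂ) : 0 ≤ relativeDensity ρ σ :=
  conjugate_nonneg_of_nonneg hρ (pinvSqrt_nonneg σ)

theorem relativeDensity_le (hσ : 0 ≤ σ) (hc : 0 ≤ c) (hle : ρ ≤ c • σ) :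
    relativeDensity ρ σ ≤ c • 1 :=
  calc relativeDensity ρ σ ≤ pinvSqrt σ * (c • σ) * pinvSqrt σ :=
        conjugate_le_conjugate_of_nonneg hle (pinvSqrt_nonneg σ)
    _ = c • supportProj σ := by
        rw [mul_smul_comm, smul_mul_assoc, pinvSqrt_mul hσ, supportProj]
    _ ≤ c • 1 := smul_le_smul_of_nonneg_left (isStarProjection_supportProj hσ).le_one hc

theorem msqrt_mul_relativeDensity_mul_msqrt (hσ : 0 ≤ σ) (hρ : 0 ≤ ρ) (hsupp : SuppLE ρ σ) :
    msqrt σ * relativeDensity ρ σ * msqrt σ = ρ := by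
  have hright : ρ * supportProj σ = ρ := hsupp.mul_eq_self (mul_supportProj hσ)
  have hleft : supportProj σ * ρ = ρ := by
    simpa [(IsSelfAdjoint.of_nonneg hρ).star_eq,
      (isStarProjection_supportProj hσ).isSelfAdjoint.star_eq] using congrArg star hright
  calc msqrt σ * relativeDensity ρ σ * msqrt σ
      = supportProj σ * ρ * (pinvSqrt σ * msqrt σ) := by
        simp only [relativeDensity, supportProj, mul_assoc]
    _ = ρ := by rw [hleft, ← commute_msqrt_pinvSqrt σ]; exact hright

theorem trace_relativeDensity_mul (hσ : 0 ≤ σ) (hρ : 0 ≤ ρ) (hsupp : SuppLE ρ σ) :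
    (relativeDensity ρ σ * σ).trace = ρ.trace := by
  conv_rhs => rw [← msqrt_mul_relativeDensity_mul_msqrt hσ hρ hsupp, trace_mul_cycle,
    msqrt_mul_msqrt hσ, trace_mul_comm]

theorem re_trace_relativeDensity_mul_self_mul_le (hσ : 0 ≤ σ) (hρ : 0 ≤ ρ) (hc : 0 ≤ c)
    (hle : ρ ≤ c • σ) :
    (relativeDensity ρ σ * (relativeDensity ρ σ * σ)).trace.re ≤ c * ρ.trace.re := by
  set X := relativeDensity ρ σ
  have hX : 0 ≤ c • 1 - X := sub_nonneg.2 (relativeDensity_le hσ hc hle)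
  have hsq : X * X ≤ c • X := by
    have hprod : 0 ≤ (c • 1 - X) * X := Commute.mul_nonneg hX (relativeDensity_nonneg hρ σ)
      ((Commute.one_left X).smul_left c |>.sub_left (Commute.refl X))
    rwa [sub_mul, smul_one_mul, sub_nonneg] at hprod
  calc (X * (X * σ)).trace.re ≤ (c • X * σ).trace.re := by
        rw [← mul_assoc]
        exact re_trace_mul_le_re_trace_mul hsq hσ
    _ = c * ρ.trace.re := by
        rw [smul_mul_assoc, trace_smul, Complex.smul_re, smul_eq_mul,
          trace_relativeDensity_mul hσ hρ (suppLE_of_le_smul hρ hle)]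

end RelativeDensity

section Marginal

open scoped MatrixOrder

variable {a b : Type*} [Fintype a] [Fintype b]

theorem margA_nonneg {ρ : Matrix (a × b) (a × b) ℂ} (hρ : 0 ≤ ρ) : 0 ≤ margA ρ := by
  have hsum : margA ρ = ∑ j, ρ.submatrix (·, j) (·, j) := by
    ext i i'
    simp [margA, Matrix.sum_apply]
  rw [hsum]
  exact Finset.sum_nonneg fun j _ => ((nonneg_iff_posSemidef.1 hρ).submatrix _).nonneg

theorem margB_nonneg {ρ : Matrix (a × b) (a × b) ℂ} (hρ : 0 ≤ ρ) : 0 ≤ margB ρ := by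
  have hsum : margB ρ = ∑ i, ρ.submatrix (i, ·) (i, ·) := by
    ext j j'
    simp [margB, Matrix.sum_apply]
  rw [hsum]
  exact Finset.sum_nonneg fun i _ => ((nonneg_iff_posSemidef.1 hρ).submatrix _).nonneg

theorem trace_margA (ρ : Matrix (a × b) (a × b) ℂ) : (margA ρ).trace = ρ.trace := by
  simp [margA, trace, Fintype.sum_prod_type]

theorem trace_margB (ρ : Matrix (a × b) (a × b) ℂ) : (margB ρ).trace = ρ.trace := by
  simp [margB, trace, Fintype.sum_prod_type_right]

theorem margB_kronecker (M : Matrix a a ℂ) (N : Matrix b b ℂ) :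
    margB (M ⊗ₖ N) = M.trace • N := by
  ext j j'
  simp [margB, trace, Finset.sum_mul]

theorem margB_one_kronecker_mul [DecidableEq a] (B : Matrix b b ℂ)
    (N : Matrix (a × b) (a × b) ℂ) : margB ((1 ⊗ₖ B) * N) = B * margB N := by
  ext j j'
  simp only [margB, of_apply, mul_apply, Fintype.sum_prod_type, kroneckerMap_apply, one_apply,
    ite_mul, one_mul, zero_mul, Finset.mul_sum, Finset.sum_comm (γ := b), Finset.sum_ite_irrel,
    Finset.sum_const_zero, Finset.sum_ite_eq, Finset.mem_univ, if_true]

theorem margB_mul_one_kronecker [DecidableEq a] (N : Matrix (a × b) (a × b) ℂ)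
    (B : Matrix b b ℂ) : margB (N * (1 ⊗ₖ B)) = margB N * B := by
  ext j j'
  simp [margB, mul_apply, Fintype.sum_prod_type, one_apply, Finset.sum_mul,
    Finset.sum_comm (γ := b)]

theorem margB_kronecker_one_mul_comm [DecidableEq b] (M : Matrix a a ℂ)
    (N : Matrix (a × b) (a × b) ℂ) : margB ((M ⊗ₖ 1) * N) = margB (N * (M ⊗ₖ 1)) := by
  ext j j'
  simp only [margB, of_apply, mul_apply, Fintype.sum_prod_type, kroneckerMap_apply, one_apply,
    mul_ite, ite_mul, mul_one, mul_zero, zero_mul, Finset.sum_ite_eq, Finset.sum_ite_eq',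
    Finset.mem_univ, if_true]
  rw [Finset.sum_comm]
  simp only [mul_comm]

variable [DecidableEq a] [DecidableEq b]

theorem IsDensity.margA {ρ : Matrix (a × b) (a × b) ℂ} (hρ : IsDensity ρ) :
    IsDensity (margA ρ) :=
  ⟨nonneg_iff_posSemidef.1 (margA_nonneg hρ.1.nonneg), (trace_margA ρ).trans hρ.2⟩

theorem IsDensity.margB {ρ : Matrix (a × b) (a × b) ℂ} (hρ : IsDensity ρ) :
    IsDensity (margB ρ) :=
  ⟨nonneg_iff_posSemidef.1 (margB_nonneg hρ.1.nonneg), (trace_margB ρ).trans hρ.2⟩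

theorem IsDensity.kronecker {A : Matrix a a ℂ} {B : Matrix b b ℂ} (hA : IsDensity A)
    (hB : IsDensity B) : IsDensity (A ⊗ₖ B) :=
  ⟨hA.1.kronecker hB.1, by rw [trace_kronecker, hA.2, hB.2, one_mul]⟩

theorem margB_relativeDensity_mul {A : Matrix a a ℂ} {B : Matrix b b ℂ}
    {ρ : Matrix (a × b) (a × b) ℂ} (hA : 0 ≤ A) (hB : 0 ≤ B) (hsupp : SuppLE ρ (A ⊗ₖ B)) :
    margB (relativeDensity ρ (A ⊗ₖ B) * (A ⊗ₖ B)) = pinvSqrt B * margB ρ * msqrt B := by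
  have hsuppA : ρ * ((msqrt A * pinvSqrt A) ⊗ₖ 1) = ρ := hsupp.mul_eq_self (by
    rw [← mul_kronecker_mul, mul_one]
    exact congrArg (· ⊗ₖ B) (mul_supportProj hA))
  calc margB (relativeDensity ρ (A ⊗ₖ B) * (A ⊗ₖ B))
      = margB ((pinvSqrt A ⊗ₖ pinvSqrt B) * ρ * (msqrt A ⊗ₖ msqrt B)) := by
        rw [relativeDensity, mul_assoc, pinvSqrt_mul (kronecker_nonneg hA hB),
          pinvSqrt_kronecker hA hB, msqrt_kronecker hA hB]
    _ = margB ((1 ⊗ₖ pinvSqrt B) * ((pinvSqrt A ⊗ₖ 1) * (ρ * (msqrt A ⊗ₖ 1))) *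
          (1 ⊗ₖ msqrt B)) := by
        rw [← mul_one (msqrt A), ← one_mul (msqrt B), mul_kronecker_mul, ← one_mul (pinvSqrt A),
          ← mul_one (pinvSqrt B), mul_kronecker_mul]
        simp only [mul_one, one_mul, mul_assoc]
    _ = pinvSqrt B * margB ρ * msqrt B := by
        rw [margB_mul_one_kronecker, margB_one_kronecker_mul, margB_kronecker_one_mul_comm,
          mul_assoc ρ, ← mul_kronecker_mul, mul_one, hsuppA]

theorem margB_relativeDensity_mul_of_margB {A : Matrix a a ℂ} {ρ : Matrix (a × b) (a × b) ℂ}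
    (hA : 0 ≤ A) (hρ : 0 ≤ ρ) (hsupp : SuppLE ρ (A ⊗ₖ margB ρ)) :
    margB (relativeDensity ρ (A ⊗ₖ margB ρ) * (A ⊗ₖ margB ρ)) = margB ρ := by
  have hB := margB_nonneg hρ
  rw [margB_relativeDensity_mul hA hB hsupp, pinvSqrt_mul hB, msqrt_mul_msqrt hB]

end Marginal

section TensorPow

open scoped MatrixOrder

variable {ι a : Type*} [Fintype ι]

/-- The tensor power `M^{⊗ι}`, acting on the space whose basis is indexed by `ι → a`. -/
def tensorPow (ι : Type*) [Fintype ι] (M : Matrix a a ℂ) : Matrix (ι → a) (ι → a) ℂ :=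
  of fun p q => ∏ l, M (p l) (q l)

theorem conjTranspose_tensorPow (M : Matrix a a ℂ) : (tensorPow ι M)ᴴ = tensorPow ι Mᴴ := by
  ext p q
  simp [tensorPow]

theorem tensorPow_one [DecidableEq a] : tensorPow ι (1 : Matrix a a ℂ) = 1 := by
  ext p q
  simp [tensorPow, one_apply, Fintype.prod_ite_zero, funext_iff]

theorem tensorPow_mul [DecidableEq ι] [Fintype a] (M N : Matrix a a ℂ) :
    tensorPow ι (M * N) = tensorPow ι M * tensorPow ι N := by
  ext p q
  simp only [tensorPow, of_apply, mul_apply, Fintype.prod_sum, Finset.prod_mul_distrib]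

theorem trace_tensorPow [DecidableEq ι] [Fintype a] (M : Matrix a a ℂ) :
    (tensorPow ι M).trace = M.trace ^ Fintype.card ι := by
  simp only [trace, diag_apply, tensorPow, of_apply,
    ← Fintype.prod_sum (fun (_ : ι) (i : a) => M i i), Finset.prod_const, Finset.card_univ]

theorem tensorPow_nonneg [Finite a] {M : Matrix a a ℂ} (hM : 0 ≤ M) : 0 ≤ tensorPow ι M := by
  classical
  cases nonempty_fintype a
  have hsqrt : (msqrt M)ᴴ = msqrt M := (IsSelfAdjoint.of_nonneg (msqrt_nonneg M)).star_eq
  rw [← msqrt_mul_msqrt hM, tensorPow_mul]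
  nth_rw 1 [← hsqrt]
  rw [← conjTranspose_tensorPow]
  exact (posSemidef_conjTranspose_mul_self _).nonneg

theorem msqrt_tensorPow [DecidableEq ι] [Fintype a] [DecidableEq a] {M : Matrix a a ℂ}
    (hM : 0 ≤ M) : msqrt (tensorPow ι M) = tensorPow ι (msqrt M) := by
  conv_lhs => rw [← msqrt_mul_msqrt hM, tensorPow_mul]
  exact msqrt_mul_self (tensorPow_nonneg (msqrt_nonneg M))

end TensorPow

section TensorAt

open scoped MatrixOrder

variable {ι a b : Type*} [DecidableEq ι]

/-- Reorders the tensor factors `A^{⊗ι} ⊗ B` as `A^{⊗(ι∖k)} ⊗ (A_k ⊗ B)`. -/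
def siteEquiv (a b : Type*) (k : ι) : (ι → a) × b ≃ ({l // l ≠ k} → a) × (a × b) :=
  (((Equiv.funSplitAt k a).trans (Equiv.prodComm _ _)).prodCongr (Equiv.refl b)).trans
    (Equiv.prodAssoc _ _ _)

variable [Fintype ι]

/-- The operator `N` placed on the factors `A_k` and `B`, with a copy of `M` on every other
factor `A_l`. -/
def tensorAt (k : ι) (M : Matrix a a ℂ) (N : Matrix (a × b) (a × b) ℂ) :
    Matrix ((ι → a) × b) ((ι → a) × b) ℂ :=
  (tensorPow {l // l ≠ k} M ⊗ₖ N).submatrix (siteEquiv a b k) (siteEquiv a b k)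

theorem tensorAt_apply (k : ι) (M : Matrix a a ℂ) (N : Matrix (a × b) (a × b) ℂ)
    (p q : (ι → a) × b) :
    tensorAt k M N p q =
      (∏ l ∈ Finset.univ.erase k, M (p.1 l) (q.1 l)) * N (p.1 k, p.2) (q.1 k, q.2) := by
  rw [Finset.prod_subtype (p := (· ≠ k)) (Finset.univ.erase k) (by simp)]
  rfl

theorem tensorAt_kronecker (k : ι) (M : Matrix a a ℂ) (N : Matrix b b ℂ) :
    tensorAt k M (M ⊗ₖ N) = tensorPow ι M ⊗ₖ N := by
  ext p q
  rw [tensorAt_apply, kroneckerMap_apply, kroneckerMap_apply, ← mul_assoc,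
    Finset.prod_erase_mul _ _ (Finset.mem_univ k)]
  rfl

theorem tensorAt_siteEquiv_symm {j k : ι} (hjk : j ≠ k) (M : Matrix a a ℂ)
    (N : Matrix (a × b) (a × b) ℂ) (r r' : {l // l ≠ k} → a) (i i' : a) (β β' : b) :
    tensorAt j M N ((siteEquiv a b k).symm (r, i, β)) ((siteEquiv a b k).symm (r', i', β')) =
      M i i' * tensorAt ⟨j, hjk⟩ M N (r, β) (r', β') := by
  have hrest : (Finset.univ.erase j).subtype (· ≠ k) = Finset.univ.erase ⟨j, hjk⟩ := by
    ext l
    simp [Subtype.ext_iff]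
  rw [tensorAt_apply, tensorAt_apply, ← mul_assoc, ← hrest,
    ← Finset.mul_prod_erase _ _ (Finset.mem_erase.2 ⟨hjk.symm, Finset.mem_univ k⟩),
    ← Finset.filter_ne', ← Finset.prod_subtype_eq_prod_filter]
  congr! 2
  · simp [siteEquiv]
  · refine Finset.prod_congr rfl fun l _ => ?_
    simp [siteEquiv, l.2]
  all_goals simp [siteEquiv, hjk]

theorem tensorAt_nonneg [Finite a] [Finite b] (k : ι) {M : Matrix a a ℂ}
    {N : Matrix (a × b) (a × b) ℂ} (hM : 0 ≤ M) (hN : 0 ≤ N) : 0 ≤ tensorAt k M N :=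
  ((nonneg_iff_posSemidef.1 (kronecker_nonneg (tensorPow_nonneg hM) hN)).submatrix _).nonneg

variable [Fintype a] [Fintype b]

theorem tensorAt_mul_tensorAt (k : ι) (M M' : Matrix a a ℂ) (N N' : Matrix (a × b) (a × b) ℂ) :
    tensorAt k M N * tensorAt k M' N' = tensorAt k (M * M') (N * N') := by
  rw [tensorAt, tensorAt, submatrix_mul_equiv, ← mul_kronecker_mul, ← tensorPow_mul, tensorAt]

/-- The marginal on `A_k ⊗ B` of an operator on `A^{⊗ι} ⊗ B`. -/
noncomputable def margAt (k : ι) (Ω : Matrix ((ι → a) × b) ((ι → a) × b) ℂ) :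
    Matrix (a × b) (a × b) ℂ :=
  margB (Ω.submatrix (siteEquiv a b k).symm (siteEquiv a b k).symm)

theorem trace_margAt (k : ι) (Ω : Matrix ((ι → a) × b) ((ι → a) × b) ℂ) :
    (margAt k Ω).trace = Ω.trace := by
  rw [margAt, trace_margB]
  exact Equiv.sum_comp (siteEquiv a b k).symm fun p => Ω p p

theorem margB_margAt (k : ι) (Ω : Matrix ((ι → a) × b) ((ι → a) × b) ℂ) :
    margB (margAt k Ω) = margB Ω := by
  ext β β'
  simp only [margB, margAt, of_apply, submatrix_apply]
  rw [← Fintype.sum_prod_type']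
  exact Equiv.sum_comp (Equiv.funSplitAt k a).symm fun p => Ω (p, β) (p, β')

theorem trace_tensorAt_one_mul [DecidableEq a] (k : ι) (N : Matrix (a × b) (a × b) ℂ)
    (Ω : Matrix ((ι → a) × b) ((ι → a) × b) ℂ) :
    (tensorAt k 1 N * Ω).trace = (N * margAt k Ω).trace := by
  rw [margAt, ← margB_one_kronecker_mul, trace_margB, ← trace_margAt k, margAt, trace_margB,
    ← submatrix_mul_equiv _ _ _ (siteEquiv a b k).symm, tensorAt, tensorPow_one,
    submatrix_submatrix]
  simp

variable {M : Matrix a a ℂ}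

theorem margAt_tensorAt_self (k : ι) (hM : M.trace = 1) (N : Matrix (a × b) (a × b) ℂ) :
    margAt k (tensorAt k M N) = N := by
  rw [margAt, tensorAt, submatrix_submatrix, Equiv.self_comp_symm, submatrix_id_id,
    margB_kronecker, trace_tensorPow, hM, one_pow, one_smul]

theorem trace_tensorAt (k : ι) (hM : M.trace = 1) (N : Matrix (a × b) (a × b) ℂ) :
    (tensorAt k M N).trace = N.trace := by
  rw [← trace_margAt k, margAt_tensorAt_self k hM]

theorem margB_tensorAt (k : ι) (hM : M.trace = 1) (N : Matrix (a × b) (a × b) ℂ) :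
    margB (tensorAt k M N) = margB N := by
  rw [← margB_margAt k, margAt_tensorAt_self k hM]

theorem margAt_tensorAt_of_ne {j k : ι} (hjk : j ≠ k) (hM : M.trace = 1)
    (N : Matrix (a × b) (a × b) ℂ) : margAt k (tensorAt j M N) = M ⊗ₖ margB N := by
  ext ⟨i, β⟩ ⟨i', β'⟩
  rw [kroneckerMap_apply, ← margB_tensorAt (⟨j, hjk⟩ : {l // l ≠ k}) hM]
  simp only [margAt, margB, of_apply, submatrix_apply, tensorAt_siteEquiv_symm hjk, Finset.mul_sum]

end TensorAt

section ConvexSplit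

open scoped MatrixOrder

variable {ι a b : Type*} [Fintype ι] [DecidableEq ι]

/-- The convex-split operator: the uniform mixture over `k` of `N` on `A_k ⊗ B` with `M` on the
other factors. -/
noncomputable def convexSplit (ι : Type*) [Fintype ι] [DecidableEq ι] (M : Matrix a a ℂ)
    (N : Matrix (a × b) (a × b) ℂ) : Matrix ((ι → a) × b) ((ι → a) × b) ℂ :=
  (Fintype.card ι : ℂ)⁻¹ • ∑ k, tensorAt k M N

theorem convexSplit_nonneg [Finite a] [Finite b] {M : Matrix a a ℂ}
    {N : Matrix (a × b) (a × b) ℂ} (hM : 0 ≤ M) (hN : 0 ≤ N) : 0 ≤ convexSplit ι M N := by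
  cases nonempty_fintype a
  cases nonempty_fintype b
  exact smul_nonneg (by positivity) (Finset.sum_nonneg fun k _ => tensorAt_nonneg k hM hN)

variable [Fintype a] [Fintype b]

theorem convexSplit_mul_kronecker (M M' : Matrix a a ℂ) (N : Matrix (a × b) (a × b) ℂ)
    (B : Matrix b b ℂ) :
    convexSplit ι M N * (tensorPow ι M' ⊗ₖ B) = convexSplit ι (M * M') (N * (M' ⊗ₖ B)) := by
  simp only [convexSplit, smul_mul_assoc, Finset.sum_mul]
  congr! 2 with k
  rw [← tensorAt_kronecker k, tensorAt_mul_tensorAt]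

theorem kronecker_mul_convexSplit (M M' : Matrix a a ℂ) (N : Matrix (a × b) (a × b) ℂ)
    (B : Matrix b b ℂ) :
    (tensorPow ι M' ⊗ₖ B) * convexSplit ι M N = convexSplit ι (M' * M) ((M' ⊗ₖ B) * N) := by
  simp only [convexSplit, mul_smul_comm, Finset.mul_sum]
  congr! 2 with k
  rw [← tensorAt_kronecker k, tensorAt_mul_tensorAt]

theorem margAt_convexSplit (k : ι) {M : Matrix a a ℂ} (hM : M.trace = 1)
    (N : Matrix (a × b) (a × b) ℂ) :
    margAt k (convexSplit ι M N) =
      (Fintype.card ι : ℂ)⁻¹ • (N + (Fintype.card ι - 1) • (M ⊗ₖ margB N)) := by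
  have hlinear : margAt k (convexSplit ι M N) =
      (Fintype.card ι : ℂ)⁻¹ • ∑ j, margAt k (tensorAt j M N) := by
    ext x y
    simp only [convexSplit, margAt, margB, of_apply, submatrix_apply, Matrix.smul_apply,
      Matrix.sum_apply, smul_eq_mul, ← Finset.mul_sum, Finset.sum_comm (γ := ι)]
  have hothers : ∑ j ∈ Finset.univ.erase k, margAt k (tensorAt j M N) =
      (Fintype.card ι - 1) • (M ⊗ₖ margB N) := by
    rw [Finset.sum_congr rfl fun j hj => margAt_tensorAt_of_ne (Finset.ne_of_mem_erase hj) hM N,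
      Finset.sum_const, Finset.card_erase_of_mem (Finset.mem_univ k), Finset.card_univ]
  rw [hlinear, ← Finset.add_sum_erase _ _ (Finset.mem_univ k), margAt_tensorAt_self k hM, hothers]

theorem msqrt_mul_convexSplit_relativeDensity_mul_msqrt [DecidableEq a] [DecidableEq b]
    {A : Matrix a a ℂ} {B : Matrix b b ℂ} {ρ : Matrix (a × b) (a × b) ℂ}
    (hA : 0 ≤ A) (hB : 0 ≤ B) (hρ : 0 ≤ ρ) (hsupp : SuppLE ρ (A ⊗ₖ B)) :
    msqrt (tensorPow ι A ⊗ₖ B) * convexSplit ι 1 (relativeDensity ρ (A ⊗ₖ B)) *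
      msqrt (tensorPow ι A ⊗ₖ B) = convexSplit ι A ρ := by
  rw [msqrt_kronecker (tensorPow_nonneg hA) hB, msqrt_tensorPow hA, kronecker_mul_convexSplit,
    convexSplit_mul_kronecker, mul_one, msqrt_mul_msqrt hA, ← msqrt_kronecker hA hB,
    msqrt_mul_relativeDensity_mul_msqrt (kronecker_nonneg hA hB) hρ hsupp]

variable [Nonempty ι]

theorem trace_convexSplit {M : Matrix a a ℂ} (hM : M.trace = 1) (N : Matrix (a × b) (a × b) ℂ) :
    (convexSplit ι M N).trace = N.trace := by
  simp [convexSplit, trace_sum, trace_tensorAt _ hM]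

theorem trace_convexSplit_one_mul_convexSplit [DecidableEq a] {M : Matrix a a ℂ}
    (hM : M.trace = 1) (X Y : Matrix (a × b) (a × b) ℂ) :
    (convexSplit ι 1 X * convexSplit ι M Y).trace =
      (Fintype.card ι : ℂ)⁻¹ *
        ((X * Y).trace + (Fintype.card ι - 1) * (X * (M ⊗ₖ margB Y)).trace) := by
  conv_lhs => rw [convexSplit]
  simp [Finset.sum_mul, trace_sum, trace_tensorAt_one_mul, margAt_convexSplit _ hM, mul_add,
    Nat.cast_pred Fintype.card_pos]

variable [DecidableEq a] [DecidableEq b] {A : Matrix a a ℂ} {ρ : Matrix (a × b) (a × b) ℂ}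
  {c : ℝ}

theorem re_trace_convexSplit_relativeDensity_sq_le (hA : IsDensity A) (hρ : IsDensity ρ)
    (hle : ρ ≤ c • (A ⊗ₖ margB ρ)) :
    (convexSplit ι 1 (relativeDensity ρ (A ⊗ₖ margB ρ)) *
      convexSplit ι 1 (relativeDensity ρ (A ⊗ₖ margB ρ)) * (tensorPow ι A ⊗ₖ margB ρ)).trace.re ≤
      1 + (c - 1) / Fintype.card ι := by
  set σ := A ⊗ₖ margB ρ with hσdef
  set X := relativeDensity ρ σ
  have hσ : IsDensity σ := hA.kronecker hρ.margB
  have hρ0 := hρ.1.nonneg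
  have hsupp : SuppLE ρ σ := suppLE_of_le_smul hρ0 hle
  have hmarg : margB (X * σ) = margB ρ := margB_relativeDensity_mul_of_margB hA.1.nonneg hρ0 hsupp
  have hcross : (X * σ).trace = 1 := (trace_relativeDensity_mul hσ.1.nonneg hρ0 hsupp).trans hρ.2
  have hdiag : (X * (X * σ)).trace.re ≤ c := by
    have hc : 0 ≤ c := zero_le_one.trans (one_le_of_le_smul hσ hρ hle)
    simpa [hρ.2] using re_trace_relativeDensity_mul_self_mul_le hσ.1.nonneg hρ0 hc hle
  calc _ = ((X * (X * σ)).trace.re + (Fintype.card ι - 1)) / Fintype.card ι := by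
        rw [mul_assoc, convexSplit_mul_kronecker, one_mul,
          trace_convexSplit_one_mul_convexSplit hA.2, ← hσdef, hmarg, hcross, mul_one,
          ← div_eq_inv_mul, Complex.div_natCast_re]
        simp
    _ ≤ (c + (Fintype.card ι - 1)) / Fintype.card ι := by gcongr
    _ = 1 + (c - 1) / Fintype.card ι := by field_simp; ring

theorem one_sub_le_sqrtFid_convexSplit (hA : IsDensity A) (hρ : IsDensity ρ)
    (hle : ρ ≤ c • (A ⊗ₖ margB ρ)) :
    1 - (c - 1) / (2 * Fintype.card ι) ≤
      sqrtFid (convexSplit ι A ρ) (tensorPow ι A ⊗ₖ margB ρ) := by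
  set X := relativeDensity ρ (A ⊗ₖ margB ρ)
  have hA0 := hA.1.nonneg
  have hρ0 := hρ.1.nonneg
  have hB0 := margB_nonneg hρ0
  have hsupp := suppLE_of_le_smul hρ0 hle
  have hX : 0 ≤ X := relativeDensity_nonneg hρ0 _
  have hmean : (convexSplit ι 1 X * (tensorPow ι A ⊗ₖ margB ρ)).trace = 1 := by
    rw [convexSplit_mul_kronecker, one_mul, trace_convexSplit hA.2,
      trace_relativeDensity_mul (kronecker_nonneg hA0 hB0) hρ0 hsupp, hρ.2]
  have hfid := three_mul_re_trace_sub_le_two_mul_sqrtFid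
    (kronecker_nonneg (tensorPow_nonneg (ι := ι) hA0) hB0)
    (convexSplit_nonneg (ι := ι) zero_le_one hX)
  rw [msqrt_mul_convexSplit_relativeDensity_mul_msqrt hA0 hB0 hρ0 hsupp, hmean,
    Complex.one_re] at hfid
  have hsecond := re_trace_convexSplit_relativeDensity_sq_le (ι := ι) hA hρ hle
  rw [div_mul_eq_div_div_swap]
  linarith

end ConvexSplit

/-- Convex-split lemma (fidelity/relative-entropy form). -/
theorem convex_split_fidelity_bound {a b : Type*} [Fintype a] [DecidableEq a]
    [Fintype b] [DecidableEq b] {K : ℕ} (hK : 1 ≤ K)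
    (ρAB : Matrix (a × b) (a × b) ℂ) (hρAB : IsDensity ρAB)
    (ρt : Matrix (a × b) (a × b) ℂ) (hρt : IsDensity ρt)
    (lam : ℝ)
    (h : ((2 : ℝ) ^ lam • (margA ρAB ⊗ₖ margB ρt) - ρt).PosSemidef)
    (τt : Matrix ((Fin K → a) × b) ((Fin K → a) × b) ℂ)
    (hτt : τt = Matrix.of fun p q => (K : ℂ)⁻¹ *
      ∑ k : Fin K, (∏ l ∈ Finset.univ.erase k, margA ρAB (p.1 l) (q.1 l)) *
        ρt (p.1 k, p.2) (q.1 k, q.2))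
    (target : Matrix ((Fin K → a) × b) ((Fin K → a) × b) ℂ)
    (htarget : target = Matrix.of fun p q =>
      (∏ l, margA ρAB (p.1 l) (q.1 l)) * margB ρt p.2 q.2) :
    fid τt target ≥ 1 - (2 : ℝ) ^ lam / K := by
  have : Nonempty (Fin K) := ⟨⟨0, hK⟩⟩
  have hτt_eq : τt = convexSplit (Fin K) (margA ρAB) ρt := by
    ext p q
    simp [hτt, convexSplit, Matrix.sum_apply, tensorAt_apply]
  have htarget_eq : target = tensorPow (Fin K) (margA ρAB) ⊗ₖ margB ρt := htarget
  have hsqrtFid : 1 - ((2 : ℝ) ^ lam - 1) / (2 * K) ≤ sqrtFid τt target := by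
    simpa [hτt_eq, htarget_eq] using
      one_sub_le_sqrtFid_convexSplit (ι := Fin K) hρAB.margA hρt (le_iff.2 h)
  have hscale : ((2 : ℝ) ^ lam - 1) / (2 * K) ≤ (2 : ℝ) ^ lam / K / 2 := by
    rw [div_div, mul_comm (K : ℝ)]
    gcongr
    linarith
  rw [fid]
  linarith [sq_nonneg (sqrtFid τt target - 1)]
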